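/- Let r ≥ 1 and let [a₁:b₁],…,[a_r:b_r] be pairwise distinct points of ℙ¹(K), giving r pairwise disjoint lines of one ruling of the smooth quadric Q = V(x₀x₃ − x₁x₂) ⊂ ℙ³ with ideals Pᵢ = (bᵢx₀ − aᵢx₁, bᵢx₂ − aᵢx₃). Then there exist a line ℓ ⊂ ℙ³ with ideal P (generated by two linearly independent linear forms) that is disjoint from each λᵢ and not contained in Q (i.e., x₀x₃ − x₁x₂ ∉ P), and a linear form L ∈ [R]₁, such that the Hartshorne–Rao module M(C) of C = λ₁ ∪ … ∪ λ_r ∪ ℓ satisfies: ×L : [M(C)]_{t−1} → [M(C)]_t has maximal rank (is injective or surjective) for every integer t. (Existential formulation of: the union of r skew lines on a smooth quadric and one general line has Hartshorne–Rao module with the WLP.) -/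

import Mathlib

/-!
Take `L = x₀ + x₃` and the extra line `ℓ = {(x s, s, y t, t)}` with `x`, `y` generic. The plane
`L = 0` cuts the quadric `q = x₀ x₃ - x₁ x₂` in a smooth conic, meets each `λᵢ` in a point `zᵢ` of
that conic, and meets `ℓ` in a point off all secants and tangents of the conic through the `zᵢ`.
Modulo the ideal of any of these lines, a form is a multiple of `L` iff it vanishes at the
corresponding point (`exists_quotient_of_eval_linePt`). Consider `×L` from degree `t` to `t + 1`.

* If `r ≤ 2 (t + 1)`, it is surjective. The `r + 1` points of the plane section are at most
  `2 (t + 1) + 1` in number, and no three are collinear, so they impose independent conditions on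
  forms of degree `t + 1` (`exists_interpolation`: products of lines through pairs of points, after
  Castelnuovo). A family of forms can therefore be changed by a global form so as to vanish at all
  these points, and then it is divisible by `L` on every line.
* If `r > 2 (t + 1)`, it is injective. Suppose a global form `F` of degree `t + 1` restricts to
  `L fᵢ` on every line. It vanishes at `r` points of the conic, hence on the whole conic
  (`eval_conic_eq_zero`), so `F = L G + q H` (`exists_of_eval_conic_eq_zero`). As `q` vanishes on
  `λᵢ`, cancelling `L` gives `G = fᵢ` there. On `ℓ`, the quadric restricts to a multiple of
  `s t`, which is coprime to `L`, so `G - f` is a multiple of `q` there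
  (`plane_cancel_extra`); subtracting that multiple of `q` from `G` shows that the class of
  `(fᵢ)` is zero.
-/

open MvPolynomial Module

noncomputable section

variable {K : Type} [Field K]

abbrev Rp (K : Type) [Field K] := MvPolynomial (Fin 4) K

/-- The ideal of the line `λ_{[a:b]}` of one ruling of the quadric
`Q = V(x₀x₃ - x₁x₂)`. -/
def quadLine (a b : K) : Ideal (Rp K) :=
  Ideal.span {C b * X 0 - C a * X 1, C b * X 2 - C a * X 3}

/-- The product of the coordinate rings of the lines. -/
abbrev Dmod (K : Type) [Field K] {ι : Type} (P : ι → Ideal (Rp K)) :=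
  (i : ι) → (Rp K ⧸ P i)

/-- The natural map `R → ⊕ᵢ R/Pᵢ`. -/
def Phi {ι : Type} (P : ι → Ideal (Rp K)) : Rp K →ₗ[Rp K] Dmod K P :=
  LinearMap.pi fun i => (P i).mkQ

/-- The Hartshorne–Rao module of the union of the (disjoint) lines with ideals `Pᵢ`:
the cokernel of `R → ⊕ᵢ R/Pᵢ`. -/
abbrev HRmod {ι : Type} (P : ι → Ideal (Rp K)) :=
  Dmod K P ⧸ LinearMap.range (Phi P)

/-- The degree-`t` component `[M(C)]_t = coker([R]_t → ⊕ᵢ [R/Pᵢ]_t)` of the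
Hartshorne–Rao module, realized as a `K`-subspace of the cokernel module. -/
def HRcomp {ι : Type} (P : ι → Ideal (Rp K)) (t : ℕ) : Submodule K (HRmod P) :=
  Submodule.map ((LinearMap.range (Phi P)).mkQ.restrictScalars K)
    (Submodule.pi Set.univ fun i =>
      Submodule.map (((P i).mkQ).restrictScalars K) (homogeneousSubmodule (Fin 4) K t))


/-- `×L^m : [M(C)]_{t-m} → [M(C)]_t` has maximal rank (is injective or surjective)
for every integer `t` (in degrees where the source is zero this is automatic). -/
def MaxRankPow {ι : Type} (P : ι → Ideal (Rp K)) (L : Rp K) (m : ℕ) : Prop :=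
  ∀ t : ℕ,
    (∀ x ∈ HRcomp P t, (L ^ m) • x = 0 → x = 0) ∨
    (∀ y ∈ HRcomp P (t + m), ∃ x ∈ HRcomp P t, (L ^ m) • x = y)

/-! ### Lines and their intersection with the plane -/

theorem homogeneousComponent_linear_mul {p : Rp K} (hp : p.IsHomogeneous 1) (H : Rp K) (n : ℕ) :
    homogeneousComponent (n + 1) (p * H) = p * homogeneousComponent n H := by
  classical
  conv_lhs => rw [← sum_homogeneousComponent H]
  conv_rhs => rw [← sum_homogeneousComponent H]
  simp only [Finset.mul_sum, map_sum]
  refine Finset.sum_congr rfl fun i _ => ?_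
  have h1 : (p * homogeneousComponent i H) ∈ homogeneousSubmodule (Fin 4) K (1 + i) :=
    hp.mul (homogeneousComponent_isHomogeneous i H)
  rw [homogeneousComponent_of_mem h1, homogeneousComponent_of_mem (homogeneousComponent_mem i H)]
  by_cases h : n = i
  · subst h; simp [add_comm]
  · rw [if_neg h, if_neg (by omega), mul_zero]

/-- A form of degree `d` evaluated at `e` times the point `z`, for `e` in any algebra. -/
theorem aeval_smul_of_isHomogeneous {A : Type} [CommRing A] [Algebra K A] {F : Rp K} {d : ℕ}
    (hF : F.IsHomogeneous d) (z : Fin 4 → K) (e : A) :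
    aeval (fun i => z i • e) F = eval z F • e ^ d := by
  rw [aeval_def, eval₂_eq', eval_eq', Finset.sum_smul]
  refine Finset.sum_congr rfl fun m hm => ?_
  have hd : ∑ i, m i = d := by
    simpa [Finsupp.weight_apply, Finsupp.sum_fintype] using hF (mem_support_iff.mp hm)
  simp only [smul_pow, Finset.prod_smul]
  rw [Finset.prod_pow_eq_pow_sum, hd, ← Algebra.smul_def, smul_smul]

/-- The ideal of the line `{(a s, b s, c t, d t)}`. The lines of the ruling are those with
`(c, d) = (a, b)`; the extra line has `(a, b) = (x, 1)` and `(c, d) = (y, 1)`. -/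
def lineI (a b c d : K) : Ideal (Rp K) :=
  Ideal.span {C b * X 0 - C a * X 1, C d * X 2 - C c * X 3}

/-- Restriction of polynomials to the line `{(a s, b s, c t, d t)}`. -/
def lineRes (a b c d : K) : Rp K →ₐ[K] MvPolynomial (Fin 2) K :=
  aeval ![C a * X 0, C b * X 0, C c * X 1, C d * X 1]

/-- The point of the line `{(a s, b s, c t, d t)}` in the plane `x₀ + x₃ = 0`. -/
def linePt (a b c d : K) : Fin 4 → K := ![a * d, b * d, -(c * a), -(d * a)]

/-- Modulo `b xᵢ - a xⱼ` there is `S` with `xᵢ = a S` and `xⱼ = b S`. -/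
theorem exists_param (a b : K) (h : (a, b) ≠ (0, 0)) (i j : Fin 4) :
    ∃ S : Rp K, ∃ p q : K, X i - C a * S = C p * (C b * X i - C a * X j) ∧
      X j - C b * S = C q * (C b * X i - C a * X j) := by
  by_cases hb : b = 0
  · have ha : a ≠ 0 := by rintro rfl; simp [hb] at h
    refine ⟨C a⁻¹ * X i, 0, -a⁻¹, ?_, ?_⟩
    · rw [← mul_assoc, ← C_mul]; simp [ha]
    · subst hb
      have : (C a⁻¹ * C a : Rp K) = 1 := by rw [← C_mul]; simp [ha]
      simp only [map_neg, map_zero]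
      linear_combination -X j * this
  · refine ⟨C b⁻¹ * X j, b⁻¹, 0, ?_, ?_⟩
    · have : (C b⁻¹ * C b : Rp K) = 1 := by rw [← C_mul]; simp [hb]
      linear_combination -X i * this
    · rw [← mul_assoc, ← C_mul]; simp [hb]

/-- Every nondegenerate line admits a parametrisation by two coordinate functions. -/
theorem exists_coords {a b c d : K} (h : (a, b) ≠ (0, 0)) (h' : (c, d) ≠ (0, 0)) :
    ∃ S T : Rp K, ∀ i, X i - ![C a * S, C b * S, C c * T, C d * T] i ∈ lineI a b c d := by
  obtain ⟨S, p, q, h1, h2⟩ := exists_param a b h 0 1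
  obtain ⟨T, p', q', h3, h4⟩ := exists_param c d h' 2 3
  refine ⟨S, T, fun i => ?_⟩
  have m1 : C b * X 0 - C a * X 1 ∈ lineI a b c d := Ideal.subset_span (by simp)
  have m2 : C d * X 2 - C c * X 3 ∈ lineI a b c d := Ideal.subset_span (by simp)
  fin_cases i
  · simpa [h1] using Ideal.mul_mem_left _ _ m1
  · simpa [h2] using Ideal.mul_mem_left _ _ m1
  · simpa [h3] using Ideal.mul_mem_left _ _ m2
  · simpa [h4] using Ideal.mul_mem_left _ _ m2

/-- Restriction to a line has an algebra section, up to elements of the ideal of the line. -/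
theorem exists_lift {a b c d : K} (h : (a, b) ≠ (0, 0)) (h' : (c, d) ≠ (0, 0)) :
    ∃ σ : MvPolynomial (Fin 2) K →ₐ[K] Rp K,
      (∀ F, F - σ (lineRes a b c d F) ∈ lineI a b c d) := by
  obtain ⟨S, T, hS⟩ := exists_coords h h'
  refine ⟨aeval ![S, T], fun F => ?_⟩
  rw [← Ideal.Quotient.eq]
  have : Ideal.Quotient.mkₐ K (lineI a b c d) =
      ((Ideal.Quotient.mkₐ K (lineI a b c d)).comp (aeval ![S, T])).comp (lineRes a b c d) := by
    refine MvPolynomial.algHom_ext fun i => ?_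
    simp only [Ideal.Quotient.mkₐ_eq_mk, AlgHom.comp_apply]
    rw [Ideal.Quotient.eq]
    convert hS i using 2
    fin_cases i <;> simp [lineRes, MvPolynomial.algebraMap_eq]
  exact congrArg (fun f => f F) this

theorem lineRes_eq_zero {a b c d : K} {F : Rp K} (hF : F ∈ lineI a b c d) :
    lineRes a b c d F = 0 := by
  obtain ⟨p, q, rfl⟩ := Ideal.mem_span_pair.mp hF
  simp [lineRes, MvPolynomial.algebraMap_eq]
  ring

theorem mem_lineI {a b c d : K} (h : (a, b) ≠ (0, 0)) (h' : (c, d) ≠ (0, 0)) {F : Rp K}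
    (hF : lineRes a b c d F = 0) : F ∈ lineI a b c d := by
  obtain ⟨σ, hσ⟩ := exists_lift h h'
  simpa [hF] using hσ F

theorem isHomogeneous_form (a b : K) (i j : Fin 4) :
    (C b * X i - C a * X j : Rp K).IsHomogeneous 1 :=
  (isHomogeneous_C_mul_X _ _).sub (isHomogeneous_C_mul_X _ _)

theorem isHomogeneous_plane : (X 0 + X 3 : Rp K).IsHomogeneous 1 :=
  (isHomogeneous_X _ _).add (isHomogeneous_X _ _)

theorem homogeneousComponent_mem_lineI {a b c d : K} {F : Rp K} (hF : F ∈ lineI a b c d) (n : ℕ) :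
    homogeneousComponent (n + 1) F ∈ lineI a b c d := by
  obtain ⟨p, q, rfl⟩ := Ideal.mem_span_pair.mp hF
  rw [map_add, mul_comm p, mul_comm q, homogeneousComponent_linear_mul (isHomogeneous_form _ _ _ _),
    homogeneousComponent_linear_mul (isHomogeneous_form _ _ _ _)]
  exact Ideal.mem_span_pair.mpr ⟨_, _, by rw [mul_comm, mul_comm (homogeneousComponent n q)]⟩

theorem eval_linePt_eq_zero {a b c d : K} {F : Rp K} (hF : F ∈ lineI a b c d) :
    eval (linePt a b c d) F = 0 := by
  obtain ⟨p, q, rfl⟩ := Ideal.mem_span_pair.mp hF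
  simp [linePt]
  ring

/-- A form vanishing at the point where the line meets the plane `x₀ + x₃ = 0` is, modulo the
ideal of the line, a multiple of `x₀ + x₃`. -/
theorem exists_quotient_of_eval_linePt {a b c d : K} (h : (a, b) ≠ (0, 0)) (h' : (c, d) ≠ (0, 0))
    (h'' : (a, d) ≠ (0, 0)) {t : ℕ} {F : Rp K} (hF : F.IsHomogeneous (t + 1))
    (h0 : eval (linePt a b c d) F = 0) :
    ∃ H : Rp K, H.IsHomogeneous t ∧ F - (X 0 + X 3) * H ∈ lineI a b c d := by
  obtain ⟨S, T, hS⟩ := exists_coords h h'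
  set J : Ideal (Rp K) :=
    Ideal.span {X 0 + X 3, C b * X 0 - C a * X 1, C d * X 2 - C c * X 3} with hJ
  have hle : lineI a b c d ≤ J := Ideal.span_mono (Set.subset_insert _ _)
  have hX : ∀ i, Ideal.Quotient.mk J (X i) =
      Ideal.Quotient.mk J (![C a * S, C b * S, C c * T, C d * T] i) := fun i =>
    Ideal.Quotient.eq.mpr (hle (hS i))
  have hL : Ideal.Quotient.mk J (C a * S + C d * T) = 0 := by
    have : Ideal.Quotient.mk J (X 0 + X 3) = 0 :=
      Ideal.Quotient.eq_zero_iff_mem.mpr (Ideal.subset_span (by simp))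
    rw [map_add, hX 0, hX 3] at this
    simpa using this
  have hC : ∀ k : K, Ideal.Quotient.mk J (C k) = algebraMap K _ k := fun k => rfl
  -- modulo `J` all coordinates are proportional to those of the point
  obtain ⟨e, he⟩ : ∃ e : Rp K ⧸ J, ∀ i, Ideal.Quotient.mk J (X i) = linePt a b c d i • e := by
    obtain ⟨e, e1, e2⟩ : ∃ e : Rp K ⧸ J, Ideal.Quotient.mk J S = d • e ∧
        Ideal.Quotient.mk J T = (-a) • e := by
      simp only [map_add, map_mul, hC, ← Algebra.smul_def] at hL
      by_cases ha : a = 0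
      · have hd : d ≠ 0 := by rintro rfl; simp [ha] at h''
        refine ⟨d⁻¹ • Ideal.Quotient.mk J S, by rw [smul_smul]; simp [hd], ?_⟩
        simp only [ha, zero_smul, zero_add, smul_eq_zero, hd, false_or, neg_zero] at hL ⊢
        exact hL
      · refine ⟨(-a⁻¹) • Ideal.Quotient.mk J T, ?_, by rw [smul_smul]; simp [ha]⟩
        rw [smul_smul]
        have := congrArg (fun w => a⁻¹ • w) hL
        simp only [smul_add, smul_smul, inv_mul_cancel₀ ha, one_smul, smul_zero] at this
        rw [eq_neg_of_add_eq_zero_left this, ← neg_smul]; congr 1; ring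
    refine ⟨e, fun i => ?_⟩
    rw [hX]
    fin_cases i <;>
      simp [linePt, map_mul, e1, e2, hC, ← Algebra.smul_def, smul_smul]
  have hmem : F ∈ J := by
    rw [← Ideal.Quotient.eq_zero_iff_mem]
    have h1 : Ideal.Quotient.mkₐ K J = aeval (fun i => linePt a b c d i • e) :=
      MvPolynomial.algHom_ext fun i => by simp [he i]
    have h2 : Ideal.Quotient.mk J F = aeval (fun i => linePt a b c d i • e) F :=
      congrArg (fun f => f F) h1
    rw [h2, aeval_smul_of_isHomogeneous hF, h0, zero_smul]
  obtain ⟨γ, w, hw, hFw⟩ := Ideal.mem_span_insert.mp hmem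
  refine ⟨homogeneousComponent t γ, homogeneousComponent_isHomogeneous _ _, ?_⟩
  have : F - (X 0 + X 3) * homogeneousComponent t γ = homogeneousComponent (t + 1) w := by
    rw [← homogeneousComponent_linear_mul isHomogeneous_plane,
      ← homogeneousComponent_eq_self hF, ← map_sub, hFw]
    congr 1; ring
  rw [this]
  exact homogeneousComponent_mem_lineI hw t

/-! ### The conic -/

/-- Finitely many nonzero polynomials `c w + d` of degree at most one have a common
non-root. -/
theorem exists_avoiding [Infinite K] {ι : Type} [Finite ι] (c d : ι → K)
    (h : ∀ i, c i ≠ 0 ∨ d i ≠ 0) : ∃ w : K, ∀ i, c i * w + d i ≠ 0 := by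
  have hfin : (⋃ i, {w : K | c i * w + d i = 0}).Finite := by
    refine Set.finite_iUnion fun i => Set.Subsingleton.finite ?_
    intro w hw w' hw'
    simp only [Set.mem_ofPred_eq] at hw hw'
    by_cases hc : c i = 0
    · exact absurd (by simpa [hc] using hw) ((h i).resolve_left (by simpa using hc))
    · exact mul_left_cancel₀ hc (by linear_combination hw - hw')
  obtain ⟨w, hw⟩ := hfin.exists_notMem
  exact ⟨w, fun i hi => hw (Set.mem_iUnion.mpr ⟨i, hi⟩)⟩

theorem exists_proportional {a b p q : K} (h : (a, b) ≠ (0, 0)) (hpq : p * b = q * a) :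
    ∃ c, p = c * a ∧ q = c * b := by
  by_cases hb : b = 0
  · have ha : a ≠ 0 := by rintro rfl; simp [hb] at h
    have hq : q = 0 := by
      have : q * a = 0 := by rw [← hpq, hb, mul_zero]
      exact (mul_eq_zero.mp this).resolve_right ha
    exact ⟨p / a, by field_simp, by rw [hq, hb, mul_zero]⟩
  · exact ⟨q / b, by field_simp; linear_combination hpq, by field_simp⟩

theorem eval_linePt_scale {F : Rp K} {d : ℕ} (hF : F.IsHomogeneous d) (a b c : K)
    (h : eval (linePt a b a b) F = 0) : eval (linePt (c * a) (c * b) (c * a) (c * b)) F = 0 := by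
  have h1 : linePt (c * a) (c * b) (c * a) (c * b) = fun i => linePt a b a b i • (c ^ 2) := by
    funext i
    fin_cases i <;> simp [linePt] <;> ring
  have := aeval_smul_of_isHomogeneous hF (linePt a b a b) (c ^ 2)
  rw [h, zero_smul, ← h1] at this
  simpa [aeval_eq_eval] using this

/-- A form of degree `d` restricts to a binary form of degree `2 d` on the conic cut out on the
quadric by `x₀ + x₃ = 0`, so it vanishes there as soon as it has more than `2 d` zeros. -/
theorem eval_conic_eq_zero [Infinite K] {r d : ℕ} (hd : d * 2 < r) {a b : Fin r → K}
    (hnz : ∀ i, (a i, b i) ≠ (0, 0)) (hdist : ∀ i j, i ≠ j → a i * b j - a j * b i ≠ 0)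
    {F : Rp K} (hF : F.IsHomogeneous d)
    (h0 : ∀ i, eval (linePt (a i) (b i) (a i) (b i)) F = 0) (α β : K) :
    eval (linePt α β α β) F = 0 := by
  by_cases hαβ : (α, β) = (0, 0)
  · obtain ⟨rfl, rfl⟩ := Prod.mk.inj hαβ
    have := eval_linePt_scale hF (a ⟨0, by omega⟩) (b ⟨0, by omega⟩) 0 (h0 _)
    simpa using this
  -- the affine line `T ↦ (α, β) + T (w, 1)` misses none of the zeros
  obtain ⟨w, hw⟩ := exists_avoiding (ι := Option (Fin r))
    (fun o => o.elim β b) (fun o => o.elim (-α) fun i => -(a i)) (by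
      have key : ∀ p q : K, (p, q) ≠ (0, 0) → q ≠ 0 ∨ -p ≠ 0 := by
        intro p q h
        by_contra! hc
        exact h (by simp [hc.1, neg_eq_zero.mp hc.2])
      rintro (_ | i)
      · exact key _ _ hαβ
      · exact key _ _ (hnz i))
  have hw0 : β * w - α ≠ 0 := by simpa [sub_eq_add_neg] using hw none
  have hwi : ∀ i, b i * w - a i ≠ 0 := fun i => by simpa [sub_eq_add_neg] using hw (some i)
  let p : Polynomial K := Polynomial.C α + Polynomial.C w * Polynomial.X
  let q : Polynomial K := Polynomial.C β + Polynomial.X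
  let P : Polynomial K := aeval ![p * q, q * q, -(p * p), -(q * p)] F
  have hp : p.natDegree ≤ 1 := by simp only [p]; compute_degree
  have hq : q.natDegree ≤ 1 := by simp only [q]; compute_degree
  have hPdeg : P.natDegree ≤ d * 2 := by
    refine aeval_natDegree_le F hF.totalDegree_le _ fun i => ?_
    fin_cases i
    · exact Polynomial.natDegree_mul_le_of_le hp hq
    · exact Polynomial.natDegree_mul_le_of_le hq hq
    · simpa using Polynomial.natDegree_mul_le_of_le hp hp
    · simpa using Polynomial.natDegree_mul_le_of_le hq hp
  have hPeval : ∀ T, P.eval T =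
      eval (linePt (α + w * T) (β + T) (α + w * T) (β + T)) F := by
    intro T
    have : (Polynomial.aeval T).comp (aeval (R := K) ![p * q, q * q, -(p * p), -(q * p)]) =
        aeval (linePt (α + w * T) (β + T) (α + w * T) (β + T)) := by
      refine MvPolynomial.algHom_ext fun i => ?_
      fin_cases i <;> simp [p, q, linePt]
    have h2 := congrArg (fun f => f F) this
    simpa [P, aeval_eq_eval, Polynomial.coe_aeval_eq_eval] using h2
  let T : Fin r → K := fun i => (β * a i - α * b i) / (b i * w - a i)
  have hT : ∀ i, ∃ c, α + w * T i = c * a i ∧ β + T i = c * b i := fun i => by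
    refine exists_proportional (hnz i) ?_
    have hTi : T i * (b i * w - a i) = β * a i - α * b i := div_mul_cancel₀ _ (hwi i)
    linear_combination hTi
  have hTinj : Function.Injective T := by
    intro i j hij
    by_contra hne
    obtain ⟨c, h1, h2⟩ := hT i
    obtain ⟨c', h3, h4⟩ := hT j
    rw [← hij] at h3 h4
    have hc : c = 0 := by
      have : c * (a i * b j - a j * b i) = 0 := by
        linear_combination (-b j) * h1 + a j * h2 + b j * h3 - a j * h4
      exact (mul_eq_zero.mp this).resolve_right (hdist i j hne)
    rw [hc, zero_mul] at h1 h2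
    exact hw0 (by linear_combination w * h2 - h1)
  have hP : P = 0 := by
    refine Polynomial.eq_zero_of_natDegree_lt_card_of_eval_eq_zero P hTinj (fun i => ?_) ?_
    · obtain ⟨c, h1, h2⟩ := hT i
      rw [hPeval, h1, h2]
      exact eval_linePt_scale hF _ _ _ (h0 i)
    · simpa using lt_of_le_of_lt hPdeg hd
  have := hPeval 0
  simpa [hP, eq_comm] using this

/-- Modulo `x₀ + x₃` and `x₀ x₃ - x₁ x₂` every polynomial has a representative that is at most
linear in `x₀` and does not involve `x₃`. -/
theorem exists_conic_normalForm (F : Rp K) :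
    ∃ G H : Rp K, ∃ A B : MvPolynomial (Fin 2) K,
      F = (X 0 + X 3) * G + (X 0 * X 3 - X 1 * X 2) * H +
        aeval ![X 1, X 2] A + X 0 * aeval ![X 1, X 2] B := by
  induction F using MvPolynomial.induction_on with
  | C c => exact ⟨0, 0, C c, 0, by simp [MvPolynomial.algebraMap_eq]⟩
  | add F F' h h' =>
    obtain ⟨G, H, A, B, h⟩ := h
    obtain ⟨G', H', A', B', h'⟩ := h'
    refine ⟨G + G', H + H', A + A', B + B', ?_⟩
    rw [map_add, map_add]
    linear_combination h + h'
  | mul_X F i h =>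
    obtain ⟨G, H, A, B, h⟩ := h
    have h0 : ∃ G' H' : Rp K, ∃ A' B' : MvPolynomial (Fin 2) K,
        F * X 0 = (X 0 + X 3) * G' + (X 0 * X 3 - X 1 * X 2) * H' +
          aeval ![X 1, X 2] A' + X 0 * aeval ![X 1, X 2] B' := by
      refine ⟨G * X 0 + X 0 * aeval ![X 1, X 2] B, H * X 0 - aeval ![X 1, X 2] B,
        -(X 0 * X 1 * B), A, ?_⟩
      simp only [map_mul, map_neg, aeval_X, Matrix.cons_val]
      linear_combination X 0 * h
    fin_cases i
    · exact h0
    · refine ⟨G * X 1, H * X 1, A * X 0, B * X 0, ?_⟩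
      simp only [map_mul, aeval_X, Matrix.cons_val, Fin.reduceFinMk]
      linear_combination X 1 * h
    · refine ⟨G * X 2, H * X 2, A * X 1, B * X 1, ?_⟩
      simp only [map_mul, aeval_X, Matrix.cons_val, Fin.reduceFinMk]
      linear_combination X 2 * h
    · obtain ⟨G', H', A', B', hFX⟩ := h0
      refine ⟨F - G', -H', -A', -B', ?_⟩
      simp only [map_neg, Fin.reduceFinMk]
      linear_combination -hFX

/-- A polynomial vanishing on the conic `x₀ + x₃ = x₀ x₃ - x₁ x₂ = 0` lies in the ideal generated
by these two equations. -/
theorem exists_of_eval_conic_eq_zero [IsAlgClosed K] [CharZero K] {F : Rp K}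
    (h : ∀ α β : K, eval (linePt α β α β) F = 0) :
    ∃ G H : Rp K, F = (X 0 + X 3) * G + (X 0 * X 3 - X 1 * X 2) * H := by
  obtain ⟨G, H, A, B, hF⟩ := exists_conic_normalForm F
  have hcomp : ∀ (z : Fin 4 → K) (D : MvPolynomial (Fin 2) K),
      eval z (aeval (R := K) ![(X 1 : Rp K), X 2] D) = eval ![z 1, z 2] D := by
    intro z D
    have : (aeval (R := K) z).comp (aeval (R := K) ![(X 1 : Rp K), X 2]) =
        aeval ![z 1, z 2] := by
      refine MvPolynomial.algHom_ext fun i => ?_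
      fin_cases i <;> simp
    simpa [aeval_eq_eval] using congrArg (fun f => f D) this
  have hev : ∀ α β : K, eval ![β * β, -(α * α)] A + α * β * eval ![β * β, -(α * α)] B = 0 := by
    intro α β
    have := h α β
    rw [hF] at this
    simp only [map_add, map_mul, map_sub, hcomp, eval_X] at this
    simp only [linePt, Matrix.cons_val] at this
    linear_combination this
  -- comparing `(α, β)` with `(-α, β)` separates the parts that are even and odd in `α`
  have hA : ∀ α β : K, eval ![β * β, -(α * α)] A = 0 := by
    intro α β
    have h1 := hev α β
    have h2 := hev (-α) β
    rw [neg_mul_neg] at h2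
    have : (2 : K) * eval ![β * β, -(α * α)] A = 0 := by linear_combination h1 + h2
    exact (mul_eq_zero.mp this).resolve_left two_ne_zero
  have hB : ∀ α β : K, α * β * eval ![β * β, -(α * α)] B = 0 := by
    intro α β
    simpa [hA α β] using hev α β
  have hsq : ∀ v : Fin 2 → K, ∃ α β : K, v = ![β * β, -(α * α)] := by
    intro v
    obtain ⟨β, hβ⟩ := IsAlgClosed.exists_pow_nat_eq (v 0) two_pos
    obtain ⟨α, hα⟩ := IsAlgClosed.exists_pow_nat_eq (-(v 1)) two_pos
    refine ⟨α, β, funext fun i => ?_⟩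
    fin_cases i
    · simp [← hβ, sq]
    · simp [← sq, hα]
  have hA0 : A = 0 := MvPolynomial.funext fun v => by
    obtain ⟨α, β, rfl⟩ := hsq v
    simpa using hA α β
  have hB0 : X 0 * X 1 * B = 0 := MvPolynomial.funext fun v => by
    obtain ⟨α, β, rfl⟩ := hsq v
    have := hB α β
    simp only [mul_eq_zero] at this
    simp only [map_mul, map_zero, eval_X, Matrix.cons_val, mul_eq_zero, neg_eq_zero]
    tauto
  have hB1 : B = 0 := by
    simpa [X_ne_zero] using hB0
  exact ⟨G, H, by simpa [hA0, hB1] using hF⟩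

/-! ### Interpolation -/

/-- If any two points can be separated from any third one by a linear form, then any point can be
separated from `2 d` others by a form of degree `d`. -/
theorem exists_form_separating {ι : Type} [DecidableEq ι] [Nontrivial ι] (z : ι → Fin 4 → K)
    (hz : ∀ i j k, j ≠ i → k ≠ i → ∃ M : Rp K, M.IsHomogeneous 1 ∧ eval (z j) M = 0 ∧
      eval (z k) M = 0 ∧ eval (z i) M ≠ 0) (i : ι) (d : ℕ) :
    ∀ S : Finset ι, i ∉ S → S.card ≤ 2 * d →
      ∃ G : Rp K, G.IsHomogeneous d ∧ (∀ j ∈ S, eval (z j) G = 0) ∧ eval (z i) G ≠ 0 := by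
  induction d with
  | zero =>
    intro S _ hS
    have : S = ∅ := Finset.card_eq_zero.mp (by omega)
    exact ⟨1, isHomogeneous_one _ _, by simp [this], by simp⟩
  | succ d ih =>
    intro S hi hS
    obtain ⟨j, k, hj, hk, S', hS', hcard, hcov⟩ : ∃ j k, j ≠ i ∧ k ≠ i ∧ ∃ S' : Finset ι,
        i ∉ S' ∧ S'.card ≤ 2 * d ∧ ∀ l ∈ S, l = j ∨ l = k ∨ l ∈ S' := by
      rcases S.eq_empty_or_nonempty with rfl | ⟨j, hj⟩
      · obtain ⟨j, hj⟩ := exists_ne i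
        exact ⟨j, j, hj, hj, ∅, by simp, by simp, by simp⟩
      · have hji : j ≠ i := fun h => hi (h ▸ hj)
        have h1 := Finset.card_erase_of_mem hj
        rcases (S.erase j).eq_empty_or_nonempty with h0 | ⟨k, hk⟩
        · refine ⟨j, j, hji, hji, ∅, by simp, by simp, fun l hl => Or.inl ?_⟩
          by_contra hne
          have := Finset.mem_erase.mpr ⟨hne, hl⟩
          simp [h0] at this
        · have h2 := Finset.card_erase_of_mem hk
          refine ⟨j, k, hji, fun h => hi (h ▸ Finset.mem_of_mem_erase hk),
            (S.erase j).erase k, by simp [hi], by omega, fun l hl => ?_⟩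
          simp only [Finset.mem_erase]
          tauto
    obtain ⟨G, hG, hG0, hGi⟩ := ih S' hS' hcard
    obtain ⟨M, hM, hMj, hMk, hMi⟩ := hz i j k hj hk
    refine ⟨G * M, hG.mul hM, fun l hl => ?_, by simpa using ⟨hGi, hMi⟩⟩
    rcases hcov l hl with rfl | rfl | h
    · simp [hMj]
    · simp [hMk]
    · simp [hG0 l h]

/-- At most `2 d + 1` points, no three of them collinear, impose independent conditions on forms
of degree `d`. -/
theorem exists_interpolation {ι : Type} [Fintype ι] [DecidableEq ι] [Nontrivial ι]
    (z : ι → Fin 4 → K)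
    (hz : ∀ i j k, j ≠ i → k ≠ i → ∃ M : Rp K, M.IsHomogeneous 1 ∧ eval (z j) M = 0 ∧
      eval (z k) M = 0 ∧ eval (z i) M ≠ 0) {d : ℕ} (hd : Fintype.card ι ≤ 2 * d + 1)
    (v : ι → K) : ∃ G : Rp K, G.IsHomogeneous d ∧ ∀ i, eval (z i) G = v i := by
  have h : ∀ i, ∃ G : Rp K, G.IsHomogeneous d ∧ (∀ j ≠ i, eval (z j) G = 0) ∧
      eval (z i) G ≠ 0 := by
    intro i
    obtain ⟨G, h1, h2, h3⟩ := exists_form_separating z hz i d (Finset.univ.erase i) (by simp)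
      (by rw [Finset.card_erase_of_mem (Finset.mem_univ i), Finset.card_univ]; omega)
    exact ⟨G, h1, fun j hj => h2 j (by simp [hj]), h3⟩
  choose G h1 h2 h3 using h
  refine ⟨∑ i, C (v i / eval (z i) (G i)) * G i,
    IsHomogeneous.sum _ _ _ fun i _ => (h1 i).C_mul _, fun i => ?_⟩
  rw [map_sum, Finset.sum_eq_single i]
  · simp [h3 i]
  · intro j _ hj
    simp [h2 j i hj.symm]
  · simp

/-! ### Graded pieces of the Hartshorne–Rao module -/

/-- A degree `t` element of the Hartshorne–Rao module is the class of a family of forms. -/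
theorem mem_HRcomp {ι : Type} {P : ι → Ideal (Rp K)} {t : ℕ} {x : HRmod P} :
    x ∈ HRcomp P t ↔ ∃ f : ι → Rp K, (∀ i, (f i).IsHomogeneous t) ∧
      Submodule.Quotient.mk (fun i => Ideal.Quotient.mk (P i) (f i)) = x := by
  constructor
  · rintro ⟨w, hw, rfl⟩
    have : ∀ i, ∃ f : Rp K, f.IsHomogeneous t ∧ Ideal.Quotient.mk (P i) f = w i := fun i =>
      hw i (Set.mem_univ i)
    choose f h1 h2 using this
    exact ⟨f, h1, by simp only [h2]; rfl⟩
  · rintro ⟨f, hf, rfl⟩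
    exact ⟨_, fun i _ => ⟨f i, hf i, rfl⟩, rfl⟩

/-- Equality of classes in the Hartshorne–Rao module, in terms of representatives. -/
theorem smul_mk_eq_mk_iff {ι : Type} {P : ι → Ideal (Rp K)} (L : Rp K) (f g : ι → Rp K) :
    L • (Submodule.Quotient.mk (fun i => Ideal.Quotient.mk (P i) (f i)) : HRmod P) =
      Submodule.Quotient.mk (fun i => Ideal.Quotient.mk (P i) (g i)) ↔
    ∃ F : Rp K, ∀ i, F - (L * f i - g i) ∈ P i := by
  rw [← Submodule.Quotient.mk_smul, Submodule.Quotient.eq]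
  constructor
  · rintro ⟨F, hF⟩
    exact ⟨F, fun i => Ideal.Quotient.eq.mp (congrFun hF i)⟩
  · rintro ⟨F, hF⟩
    exact ⟨F, funext fun i => Ideal.Quotient.eq.mpr (hF i)⟩

/-- Injectivity of multiplication by `L` on the degree `t` component, in terms of
representatives. -/
theorem HRcomp_injective {ι : Type} {P : ι → Ideal (Rp K)} {L : Rp K} {t : ℕ}
    (h : ∀ f : ι → Rp K, (∀ i, (f i).IsHomogeneous t) → ∀ F : Rp K, (∀ i, F - L * f i ∈ P i) →
      ∃ G : Rp K, ∀ i, G - f i ∈ P i) :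
    ∀ x ∈ HRcomp P t, (L ^ 1) • x = 0 → x = 0 := by
  intro x hx h0
  obtain ⟨f, hf, rfl⟩ := mem_HRcomp.mp hx
  have hz : (0 : HRmod P) = Submodule.Quotient.mk (fun i => Ideal.Quotient.mk (P i) 0) := by
    simp only [map_zero]; rfl
  rw [pow_one, hz, smul_mk_eq_mk_iff L f (fun _ => 0)] at h0
  obtain ⟨F, hF⟩ := h0
  obtain ⟨G, hG⟩ := h f hf F (by simpa using hF)
  rw [← one_smul (Rp K) (Submodule.Quotient.mk _ : HRmod P), hz,
    smul_mk_eq_mk_iff 1 f (fun _ => 0)]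
  exact ⟨G, by simpa using hG⟩

/-- Multiplication by `L` is surjective if, on each `R/Pᵢ`, a form vanishing at the point `zᵢ` is
a multiple of `L`, and the points `zᵢ` impose independent conditions on forms. -/
theorem HRcomp_surjective {ι : Type} {P : ι → Ideal (Rp K)} {L : Rp K} {t : ℕ}
    {z : ι → Fin 4 → K}
    (hP : ∀ i (F : Rp K), F.IsHomogeneous (t + 1) → eval (z i) F = 0 →
      ∃ H : Rp K, H.IsHomogeneous t ∧ F - L * H ∈ P i)
    (hz : ∀ v : ι → K, ∃ G : Rp K, G.IsHomogeneous (t + 1) ∧ ∀ i, eval (z i) G = v i) :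
    ∀ y ∈ HRcomp P (t + 1), ∃ x ∈ HRcomp P t, (L ^ 1) • x = y := by
  intro y hy
  obtain ⟨g, hg, rfl⟩ := mem_HRcomp.mp hy
  obtain ⟨G, hG, hGv⟩ := hz fun i => eval (z i) (g i)
  have : ∀ i, ∃ H : Rp K, H.IsHomogeneous t ∧ (g i - G) - L * H ∈ P i := fun i =>
    hP i _ ((hg i).sub hG) (by simp [hGv i])
  choose H hH hHP using this
  refine ⟨_, mem_HRcomp.mpr ⟨H, hH, rfl⟩, ?_⟩
  rw [pow_one, smul_mk_eq_mk_iff]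
  refine ⟨-G, fun i => ?_⟩
  convert hHP i using 1
  ring

/-! ### Cancelling the plane -/

/-- The plane `x₀ + x₃ = 0` contains no line of the ruling. -/
theorem plane_cancel_quadLine {a b : K} (h : (a, b) ≠ (0, 0)) {F : Rp K}
    (hF : (X 0 + X 3) * F ∈ lineI a b a b) : F ∈ lineI a b a b := by
  refine mem_lineI h h ?_
  have h1 := lineRes_eq_zero hF
  rw [map_mul] at h1
  refine (mul_eq_zero.mp h1).resolve_left fun h0 => h ?_
  have e1 := congrArg (eval ![1, 0]) h0
  have e2 := congrArg (eval ![0, 1]) h0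
  simp [lineRes] at e1 e2
  rw [e1, e2]

/-- On the extra line the quadric cuts out two points off the plane `x₀ + x₃ = 0`, so
`x₀ + x₃` is invertible modulo the quadric there. -/
theorem plane_cancel_extra {x y : K} (hx : x ≠ 0) (hxy : x ≠ y) {F H : Rp K}
    (hF : (X 0 + X 3) * F - (X 0 * X 3 - X 1 * X 2) * H ∈ lineI x 1 y 1) :
    ∃ H' : Rp K, F - (X 0 * X 3 - X 1 * X 2) * H' ∈ lineI x 1 y 1 := by
  have n1 : (x, (1 : K)) ≠ (0, 0) := by simp
  have n2 : (y, (1 : K)) ≠ (0, 0) := by simp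
  have h1 := lineRes_eq_zero hF
  have hL : lineRes x 1 y 1 (X 0 + X 3) = C x * X 0 + X 1 := by simp [lineRes]
  have hq : lineRes x 1 y 1 (X 0 * X 3 - X 1 * X 2) = C (x - y) * (X 0 * X 1) := by
    simp [lineRes]; ring
  rw [map_sub, map_mul, map_mul, hL, hq] at h1
  set f := lineRes x 1 y 1 F with hf
  have d0 : (X 0 : MvPolynomial (Fin 2) K) ∣ f := by
    have : (X 0 : MvPolynomial (Fin 2) K) ∣ (C x * X 0 + X 1) * f :=
      ⟨C (x - y) * X 1 * lineRes x 1 y 1 H, by linear_combination h1⟩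
    refine ((X_prime (i := (0 : Fin 2))).dvd_or_dvd this).resolve_left ?_
    rintro ⟨c, hc⟩
    simpa using congrArg (eval ![0, 1]) hc
  obtain ⟨f1, hf1⟩ := d0
  have d1 : (X 1 : MvPolynomial (Fin 2) K) ∣ f1 := by
    have : (X 1 : MvPolynomial (Fin 2) K) ∣ (C x * X 0 + X 1) * (X 0 * f1) :=
      ⟨C (x - y) * X 0 * lineRes x 1 y 1 H, by rw [← hf1]; linear_combination h1⟩
    have hp := X_prime (R := K) (i := (1 : Fin 2))
    refine (hp.dvd_or_dvd ((hp.dvd_or_dvd this).resolve_left ?_)).resolve_left ?_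
    · rintro ⟨c, hc⟩
      exact hx (by simpa using congrArg (eval ![1, 0]) hc)
    · rintro ⟨c, hc⟩
      simpa using congrArg (eval ![1, 0]) hc
  obtain ⟨f2, hf2⟩ := d1
  obtain ⟨σ, hσ⟩ := exists_lift n1 n2
  -- the form `F` restricts to `X₀ X₁ f₂` on the line, a multiple of the restricted quadric
  refine ⟨C (x - y)⁻¹ * σ f2, ?_⟩
  have key : (X 0 * X 3 - X 1 * X 2 : Rp K) - C (x - y) * σ (X 0 * X 1) ∈ lineI x 1 y 1 := by
    have := hσ (X 0 * X 3 - X 1 * X 2)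
    rw [hq, map_mul] at this
    simpa [MvPolynomial.algebraMap_eq, ← MvPolynomial.algebraMap_eq] using this
  have h2 := hσ F
  rw [← hf, hf1, hf2, map_mul, map_mul] at h2
  have hc : (C (x - y)⁻¹ * C (x - y) : Rp K) = 1 := by
    rw [← C_mul, inv_mul_cancel₀ (sub_ne_zero.mpr hxy), C_1]
  rw [map_mul] at key
  have := sub_mem h2 (Ideal.mul_mem_left _ (C (x - y)⁻¹ * σ f2) key)
  convert this using 1
  linear_combination (-(σ (X 0) * σ (X 1) * σ f2)) * hc

/-! ### Choice of the extra line -/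

/-- No point of the plane section is collinear with two others. The hypothesis `hs` says that the
trace of the extra line lies on no secant or tangent of the conic through the given points; the
case `j = k` is included, so `M` may be a tangent. -/
theorem exists_linear_separating {r : ℕ} {a b : Fin r → K} {x y : K}
    (hnz : ∀ i, (a i, b i) ≠ (0, 0)) (hdist : ∀ i j, i ≠ j → a i * b j - a j * b i ≠ 0)
    (hx : ∀ i, b i * x - a i ≠ 0)
    (hs : ∀ j k, (b j * b k * y - (b j * a k + a j * b k)) * x + a j * a k ≠ 0)
    (i j k : Fin r ⊕ Unit) (hji : j ≠ i) (hki : k ≠ i) :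
    ∃ M : Rp K, M.IsHomogeneous 1 ∧
      eval (Sum.elim (fun i => linePt (a i) (b i) (a i) (b i)) (fun _ => linePt x 1 y 1) j) M = 0 ∧
      eval (Sum.elim (fun i => linePt (a i) (b i) (a i) (b i)) (fun _ => linePt x 1 y 1) k) M = 0 ∧
      eval (Sum.elim (fun i => linePt (a i) (b i) (a i) (b i)) (fun _ => linePt x 1 y 1) i) M
        ≠ 0 := by
  have hform : ∀ p q s : K, (C p * X 0 + C q * X 1 + C s * X 2 : Rp K).IsHomogeneous 1 :=
    fun p q s => ((isHomogeneous_C_mul_X _ _).add (isHomogeneous_C_mul_X _ _)).add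
      (isHomogeneous_C_mul_X _ _)
  have hev : ∀ p q s α β γ δ : K, eval (linePt α β γ δ) (C p * X 0 + C q * X 1 + C s * X 2) =
      p * (α * δ) + q * (β * δ) - s * (γ * α) := by
    intro p q s α β γ δ
    simp [linePt]
    ring
  rcases j with j | j <;> rcases k with k | k
  · -- the secant of the conic through two of the points
    refine ⟨_, hform (-(b j * a k + a j * b k)) (a j * a k) (-(b j * b k)), ?_, ?_, ?_⟩
    · simp only [Sum.elim_inl, hev]; ring
    · simp only [Sum.elim_inl, hev]; ring
    · rcases i with i | i
      · have h1 := hdist i j (by rintro rfl; exact hji rfl)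
        have h2 := hdist i k (by rintro rfl; exact hki rfl)
        simp only [Sum.elim_inl, hev]
        convert mul_ne_zero h1 h2 using 1
        ring
      · simp only [Sum.elim_inr, hev]
        convert hs j k using 1
        ring
  · rcases i with i | i
    · refine ⟨_, hform (a j * a j - b j * b j * (x * y)) (a j * b j * (x * y) - a j * a j * x)
        (a j * b j - b j * b j * x), ?_, ?_, ?_⟩
      · simp only [Sum.elim_inl, hev]; ring
      · simp only [Sum.elim_inr, hev]; ring
      · have h1 := hdist i j (by rintro rfl; exact hji rfl)
        simp only [Sum.elim_inl, hev]
        convert mul_ne_zero (neg_ne_zero.mpr h1) (hs i j) using 1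
        ring
    · exact absurd rfl hki
  · rcases i with i | i
    · refine ⟨_, hform (a k * a k - b k * b k * (x * y)) (a k * b k * (x * y) - a k * a k * x)
        (a k * b k - b k * b k * x), ?_, ?_, ?_⟩
      · simp only [Sum.elim_inr, hev]; ring
      · simp only [Sum.elim_inl, hev]; ring
      · have h1 := hdist i k (by rintro rfl; exact hki rfl)
        simp only [Sum.elim_inl, hev]
        convert mul_ne_zero (neg_ne_zero.mpr h1) (hs i k) using 1
        ring
    · exact absurd rfl hji
  · rcases i with i | i
    · -- one of the two equations of the extra line works
      by_cases hb : b i = 0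
      · have ha : a i ≠ 0 := fun ha => hnz i (by rw [ha, hb])
        refine ⟨_, isHomogeneous_form y 1 2 3, ?_, ?_, ?_⟩
        · simp [linePt]
        · simp [linePt]
        · simp [linePt, hb, ha]
      · refine ⟨_, isHomogeneous_form x 1 0 1, ?_, ?_, ?_⟩
        · simp [linePt]
        · simp [linePt]
        · simp only [Sum.elim_inl, linePt, map_sub, map_mul, eval_C, eval_X, Matrix.cons_val]
          convert mul_ne_zero hb (neg_ne_zero.mpr (hx i)) using 1
          ring
    · exact absurd rfl hji

/-- Given `r` pairwise disjoint lines of one ruling of the smooth quadric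
`Q = V(x₀x₃ - x₁x₂)`, there is a further line `ℓ` (with ideal spanned by two
independent linear forms `u, u'`), disjoint from each of them and not contained
in `Q`, and a linear form `L`, such that multiplication by `L` on the
Hartshorne–Rao module of the union of all `r + 1` lines has maximal rank in
every degree (WLP). -/
theorem stmt_15 {K : Type} [Field K] [IsAlgClosed K] [CharZero K]
    (r : ℕ) (hr : 1 ≤ r) (a b : Fin r → K)
    (hnz : ∀ i, (a i, b i) ≠ (0, 0))
    (hdist : ∀ i j, i ≠ j → a i * b j - a j * b i ≠ 0) :
    ∃ u u' L : Rp K,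
      u ∈ homogeneousSubmodule (Fin 4) K 1 ∧
      u' ∈ homogeneousSubmodule (Fin 4) K 1 ∧
      LinearIndependent K ![u, u'] ∧
      -- the extra line is skew to each line on the quadric
      (∀ i, Submodule.span K {C (b i) * X 0 - C (a i) * X 1,
          C (b i) * X 2 - C (a i) * X 3, u, u'} = homogeneousSubmodule (Fin 4) K 1) ∧
      -- the extra line does not lie on the quadric
      (X 0 * X 3 - X 1 * X 2 : Rp K) ∉ Ideal.span {u, u'} ∧
      L ∈ homogeneousSubmodule (Fin 4) K 1 ∧ L ≠ 0 ∧
      MaxRankPow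
        (Sum.elim (fun i : Fin r => quadLine (a i) (b i))
          (fun _ : Unit => Ideal.span {u, u'})) L 1 := by
  classical
  have : Infinite K := IsAlgClosed.instInfinite
  -- `y` puts the extra line off the lines of the ruling in its second pair of coordinates; then
  -- `x` keeps it skew to them, off the quadric, and its trace on the plane off all secants
  obtain ⟨y, hy'⟩ := exists_avoiding b (fun i => -(a i)) fun i => by
    by_contra! hc
    exact hnz i (by rw [hc.1, neg_eq_zero.mp hc.2])
  have hy : ∀ i, b i * y - a i ≠ 0 := fun i => by simpa [sub_eq_add_neg] using hy' i
  obtain ⟨x, hx'⟩ := exists_avoiding (ι := Fin r ⊕ (Fin r × Fin r) ⊕ Bool)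
    (Sum.elim b (Sum.elim
      (fun p => b p.1 * b p.2 * y - (b p.1 * a p.2 + a p.1 * b p.2)) (fun _ => 1)))
    (Sum.elim (fun i => -(a i)) (Sum.elim (fun p => a p.1 * a p.2) (fun o => if o then -y else 0)))
    (by
      rintro (i | ⟨j, k⟩ | o)
      · by_contra! hc
        have h1 : b i = 0 := hc.1
        have h2 : -(a i) = 0 := hc.2
        exact hnz i (by rw [h1, neg_eq_zero.mp h2])
      · by_contra! hc
        obtain ⟨h1, h2⟩ := hc
        simp only [Sum.elim_inl, Sum.elim_inr] at h1 h2
        -- if `a j = 0` the secant polynomial is `b j * (b k * y - a k) * x`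
        have key : ∀ j k, a j = 0 →
            b j * b k * y - (b j * a k + a j * b k) = 0 → False := by
          intro j k h0 h1
          have hb : b j ≠ 0 := fun hb => hnz j (by rw [h0, hb])
          exact mul_ne_zero hb (hy k) (by rw [h0] at h1; linear_combination h1)
        rcases mul_eq_zero.mp h2 with h0 | h0
        · exact key j k h0 h1
        · exact key k j h0 (by linear_combination h1)
      · exact Or.inl one_ne_zero)
  have hx : ∀ i, b i * x - a i ≠ 0 := fun i => by simpa [sub_eq_add_neg] using hx' (Sum.inl i)
  have hs : ∀ j k, (b j * b k * y - (b j * a k + a j * b k)) * x + a j * a k ≠ 0 :=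
    fun j k => hx' (Sum.inr (Sum.inl (j, k)))
  have hx0 : x ≠ 0 := by simpa using hx' (Sum.inr (Sum.inr false))
  have hxy : x ≠ y := by
    have := hx' (Sum.inr (Sum.inr true))
    intro h
    simp [h] at this
  have n1 : (x, (1 : K)) ≠ (0, 0) := by simp
  have n2 : (y, (1 : K)) ≠ (0, 0) := by simp
  refine ⟨C 1 * X 0 - C x * X 1, C 1 * X 2 - C y * X 3, X 0 + X 3, isHomogeneous_form _ _ _ _,
    isHomogeneous_form _ _ _ _, ?_, ?_, ?_, isHomogeneous_plane, ?_, ?_⟩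
  · rw [LinearIndependent.pair_iff]
    intro s t h
    have e1 := congrArg (eval ![1, 0, 0, 0]) h
    have e2 := congrArg (eval ![0, 0, 1, 0]) h
    simp [smul_eval] at e1 e2
    exact ⟨e1, e2⟩
  · intro i
    apply le_antisymm
    · rw [Submodule.span_le]
      rintro w (rfl | rfl | rfl | rfl) <;> exact isHomogeneous_form _ _ _ _
    · rw [homogeneousSubmodule_one_eq_span_X, Submodule.span_le]
      set W := Submodule.span K ({C (b i) * X 0 - C (a i) * X 1, C (b i) * X 2 - C (a i) * X 3,
        C 1 * X 0 - C x * X 1, C 1 * X 2 - C y * X 3} : Set (Rp K)) with hW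
      have key : ∀ (s : K) (p q : Fin 4), b i * s - a i ≠ 0 →
          C (b i) * X p - C (a i) * X q ∈ W → C 1 * X p - C s * X q ∈ W →
          (X p : Rp K) ∈ W ∧ (X q : Rp K) ∈ W := by
        intro s p q hs' m1 m2
        have hq : (X q : Rp K) ∈ W := by
          have := W.smul_mem (b i * s - a i)⁻¹ (sub_mem m1 (W.smul_mem (b i) m2))
          convert this using 1
          have hc : (C (b i * s - a i)⁻¹ * C (b i * s - a i) : Rp K) = 1 := by
            rw [← C_mul, inv_mul_cancel₀ hs', C_1]
          simp only [smul_eq_C_mul, map_sub, map_mul, C_1] at hc ⊢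
          linear_combination (-X q) * hc
        refine ⟨?_, hq⟩
        convert add_mem m2 (W.smul_mem s hq) using 1
        simp [smul_eq_C_mul]
      obtain ⟨k0, k1⟩ := key x 0 1 (hx i) (Submodule.subset_span (by simp))
        (Submodule.subset_span (by simp))
      obtain ⟨k2, k3⟩ := key y 2 3 (hy i) (Submodule.subset_span (by simp))
        (Submodule.subset_span (by simp))
      rintro _ ⟨j, rfl⟩
      fin_cases j
      exacts [k0, k1, k2, k3]
  · intro h
    obtain ⟨p, q, h⟩ := Ideal.mem_span_pair.mp h
    have := congrArg (eval ![x, 1, y, 1]) h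
    simp at this
    exact hxy (sub_eq_zero.mp this.symm)
  · intro h
    simpa using congrArg (eval ![1, 0, 0, 0]) h
  · change MaxRankPow (Sum.elim (fun i : Fin r => lineI (a i) (b i) (a i) (b i))
      (fun _ : Unit => lineI x 1 y 1)) (X 0 + X 3) 1
    intro t
    rcases Nat.lt_or_ge ((t + 1) * 2) r with htr | htr
    · left
      refine HRcomp_injective fun f hf F hF => ?_
      -- the degree `t + 1` part of `F` contains the conic cut out by the plane on the quadric
      have hF1 : ∀ i, homogeneousComponent (t + 1) F - (X 0 + X 3) * f (Sum.inl i) ∈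
          lineI (a i) (b i) (a i) (b i) := by
        intro i
        have := homogeneousComponent_mem_lineI (hF (Sum.inl i)) t
        rwa [map_sub, homogeneousComponent_linear_mul isHomogeneous_plane,
          homogeneousComponent_eq_self (hf _)] at this
      have hF2 : homogeneousComponent (t + 1) F - (X 0 + X 3) * f (Sum.inr ()) ∈
          lineI x 1 y 1 := by
        have := homogeneousComponent_mem_lineI (hF (Sum.inr ())) t
        rwa [map_sub, homogeneousComponent_linear_mul isHomogeneous_plane,
          homogeneousComponent_eq_self (hf _)] at this
      have hF0 : ∀ i, eval (linePt (a i) (b i) (a i) (b i)) (homogeneousComponent (t + 1) F) = 0 := by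
        intro i
        have := eval_linePt_eq_zero (hF1 i)
        simp only [map_sub, map_mul, map_add, eval_X] at this
        simp only [linePt, Matrix.cons_val] at this ⊢
        linear_combination this
      obtain ⟨G, H, hGH⟩ := exists_of_eval_conic_eq_zero fun α β =>
        eval_conic_eq_zero htr hnz hdist (homogeneousComponent_isHomogeneous _ _) hF0 α β
      rw [hGH] at hF1 hF2
      have hq : ∀ i, (X 0 * X 3 - X 1 * X 2 : Rp K) ∈ lineI (a i) (b i) (a i) (b i) := fun i =>
        mem_lineI (hnz i) (hnz i) (by simp [lineRes]; ring)
      have hGi : ∀ i, G - f (Sum.inl i) ∈ lineI (a i) (b i) (a i) (b i) := by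
        intro i
        refine plane_cancel_quadLine (hnz i) ?_
        convert sub_mem (hF1 i) (Ideal.mul_mem_left _ H (hq i)) using 1
        ring
      obtain ⟨H', hH'⟩ := plane_cancel_extra (F := G - f (Sum.inr ())) (H := -H) hx0 hxy (by
        convert hF2 using 1
        ring)
      refine ⟨G - (X 0 * X 3 - X 1 * X 2) * H', ?_⟩
      rintro (i | i)
      · change _ ∈ lineI (a i) (b i) (a i) (b i)
        convert sub_mem (hGi i) (Ideal.mul_mem_right H' _ (hq i)) using 1
        ring
      · change _ - f (Sum.inr ()) ∈ lineI x 1 y 1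
        convert hH' using 1
        ring
    · right
      have : Nontrivial (Fin r ⊕ Unit) := ⟨Sum.inl ⟨0, hr⟩, Sum.inr (), by simp⟩
      refine HRcomp_surjective (z := Sum.elim (fun i => linePt (a i) (b i) (a i) (b i))
        (fun _ => linePt x 1 y 1)) ?_ fun v => exists_interpolation _
          (exists_linear_separating hnz hdist hx hs) (by simp; omega) v
      rintro (i | i) F hF h0
      · have hab : (a i, b i) ≠ (0, 0) := hnz i
        exact exists_quotient_of_eval_linePt hab hab hab hF h0
      · exact exists_quotient_of_eval_linePt n1 n2 (by simp) hF h0
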